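/- Assume 0 < η_i < 1/‖A_i‖² for i = 1, …, p and that the x₀-minimal norm solution x† satisfies the source condition x† − x₀ = A^* λ† for some λ† ∈ Y. Fix constants 0 < c₁ ≤ c₂. If δ > 0 and the stopping index n_δ is chosen such that c₁ δ^{−1} ≤ (n_δ + 1)/p ≤ c₂ δ^{−1}, then E[‖x_{n_δ}^δ − x†‖²] ≤ C δ, where C is a constant depending only on c₀, η̄, M₀ := ‖x₀ − x†‖² + c₀ Σ_{i=1}^p (1/η_i) ‖λ_i†‖², and c₁, c₂. -/

import Mathlib

/-- Expectation with respect to the first `m` i.i.d. uniformly distributed indices: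
for a quantity `f` determined by the coordinates `i_0, …, i_{m-1}` of the sample path,
`avg p hp m f = p^{-m} ∑_{(i_0,…,i_{m-1}) ∈ {1,…,p}^m} f`. -/
noncomputable def avg (p : ℕ) (hp : 0 < p) (m : ℕ) (f : (ℕ → Fin p) → ℝ) : ℝ :=
  (∑ σ : Fin m → Fin p, f (fun k => if h : k < m then σ ⟨k, h⟩ else ⟨0, hp⟩)) / (p : ℝ) ^ m

section Average

variable {p : ℕ} {hp : 0 < p}

lemma avg_succ (m : ℕ) (f : (ℕ → Fin p) → ℝ) :
    avg p hp (m + 1) f = avg p hp m fun ω => (∑ i, f (Function.update ω m i)) / p := by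
  have key : ∀ (i : Fin p) (σ : Fin m → Fin p),
      (fun k => if h : k < m + 1 then
        (Fin.snoc σ i : Fin (m + 1) → Fin p) ⟨k, h⟩ else ⟨0, hp⟩) =
      Function.update (fun k => if h : k < m then σ ⟨k, h⟩ else ⟨0, hp⟩) m i := by
    intro i σ
    funext k
    rcases lt_trichotomy k m with h | h | h
    · simp [Function.update, h.ne, h, Nat.lt_succ_of_lt h, Fin.snoc]
    · subst h
      simp [Fin.snoc]
    · simp [Function.update, h.ne', Nat.not_lt.2 h.le, show ¬ k < m + 1 by omega]
  unfold avg
  rw [← (Fin.snocEquiv fun _ : Fin (m + 1) => Fin p).sum_comp, Fintype.sum_prod_type,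
    Finset.sum_comm, ← Finset.sum_div, div_div, pow_succ']
  congr 1
  refine Finset.sum_congr rfl fun σ _ => Finset.sum_congr rfl fun i _ => ?_
  exact congrArg f (key i σ)

lemma avg_mono {m : ℕ} {f g : (ℕ → Fin p) → ℝ} (h : ∀ ω, f ω ≤ g ω) :
    avg p hp m f ≤ avg p hp m g :=
  div_le_div_of_nonneg_right (Finset.sum_le_sum fun _ _ => h _) (by positivity)

lemma avg_add (m : ℕ) (f g : (ℕ → Fin p) → ℝ) :
    avg p hp m (fun ω => f ω + g ω) = avg p hp m f + avg p hp m g := by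
  simp only [avg, Finset.sum_add_distrib, add_div]

lemma avg_const_mul (m : ℕ) (c : ℝ) (f : (ℕ → Fin p) → ℝ) :
    avg p hp m (fun ω => c * f ω) = c * avg p hp m f := by
  simp only [avg, ← Finset.mul_sum, mul_div_assoc]

lemma avg_const (m : ℕ) (c : ℝ) : avg p hp m (fun _ => c) = c := by
  have : (p : ℝ) ≠ 0 := by positivity
  simp [avg, this]

lemma avg_succ_of_forall_update_eq {m : ℕ} {f : (ℕ → Fin p) → ℝ}
    (h : ∀ ω i, f (Function.update ω m i) = f ω) :
    avg p hp (m + 1) f = avg p hp m f := by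
  have : (p : ℝ) ≠ 0 := by positivity
  simp [avg_succ, h, this]

/-- Averaged form of a one-step drift inequality. -/
lemma avg_le_of_drift {V : (ℕ → Fin p) → ℕ → ℝ} {v c : ℝ} (h₀ : ∀ ω, V ω 0 ≤ v)
    (h : ∀ ω n, ∑ i, V (Function.update ω n i) (n + 1) ≤ p * V ω n + c) (n : ℕ) :
    avg p hp n (fun ω => V ω n) ≤ v + n * (c / p) := by
  have hp' : (0 : ℝ) < p := by positivity
  induction n with
  | zero => exact (avg_mono h₀).trans (by simp [avg_const])
  | succ n ih =>
    rw [avg_succ]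
    refine (avg_mono (g := fun ω => V ω n + c / p) fun ω => ?_).trans ?_
    · rw [div_le_iff₀ hp', add_mul, div_mul_cancel₀ _ hp'.ne']
      linarith [h ω n]
    · rw [avg_add, avg_const]
      push_cast
      linarith

end Average

lemma update_eq_of_recursion {ι S : Type*} {F : (ℕ → ι) → ℕ → S} {s : S} {T : ℕ → ι → S → S}
    (h₀ : ∀ ω, F ω 0 = s) (h : ∀ ω n, F ω (n + 1) = T n (ω n) (F ω n))
    (ω : ℕ → ι) (i : ι) {n k : ℕ} (hnk : n ≤ k) : F (Function.update ω k i) n = F ω n := by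
  induction n with
  | zero => rw [h₀, h₀]
  | succ n ih =>
    rw [h, h, ih (by omega), Function.update_of_ne (by omega)]

lemma sum_apply_update {ι M : Type*} [Fintype ι] [DecidableEq ι] [AddCommGroup M]
    {Y : ι → Type*} (g : ∀ j, Y j → M) (ζ : ∀ j, Y j) (i : ι) (v : Y i) :
    ∑ j, g j (Function.update ζ i v j) = ∑ j, g j (ζ j) - g i (ζ i) + g i v := by
  rw [← Finset.add_sum_erase _ _ (Finset.mem_univ i),
    ← Finset.add_sum_erase _ (fun j => g j (ζ j)) (Finset.mem_univ i), Function.update_self]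
  have : ∑ j ∈ Finset.univ.erase i, g j (Function.update ζ i v j)
      = ∑ j ∈ Finset.univ.erase i, g j (ζ j) :=
    Finset.sum_congr rfl fun j hj => by rw [Function.update_of_ne (Finset.ne_of_mem_erase hj)]
  rw [this]
  abel

/-- The auxiliary sequence `u n + n (u n - u (n - 1))` of which `u` is the running mean. -/
def extrapolation {X : Type*} [AddCommGroup X] [Module ℝ X] (u : ℕ → X) (n : ℕ) : X :=
  ((n : ℝ) + 1) • u n - (n : ℝ) • u (n - 1)

section Extrapolation

variable {X : Type*} [NormedAddCommGroup X] [InnerProductSpace ℝ X]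

@[simp] lemma extrapolation_zero (u : ℕ → X) : extrapolation u 0 = u 0 := by
  simp [extrapolation]

lemma extrapolation_sub (u v : ℕ → X) (n : ℕ) :
    extrapolation (fun k => u k - v k) n = extrapolation u n - extrapolation v n := by
  simp only [extrapolation]
  module

lemma extrapolation_sub_const (u : ℕ → X) (a : X) (n : ℕ) :
    extrapolation (fun k => u k - a) n = extrapolation u n - a := by
  simp only [extrapolation]
  module

lemma extrapolation_succ (u : ℕ → X) (n : ℕ) :
    extrapolation u (n + 1) = ((n : ℝ) + 2) • u (n + 1) - ((n : ℝ) + 1) • u n := by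
  simp only [extrapolation, Nat.add_sub_cancel]
  push_cast
  module

lemma extrapolation_succ_of_heavy_ball {u : ℕ → X} {n : ℕ} {a : ℝ} {g : X}
    (h : u (n + 1) = u n - (((n : ℝ) + 2)⁻¹ * a) • g
      + ((n : ℝ) / ((n : ℝ) + 2)) • (u n - u (n - 1))) :
    extrapolation u (n + 1) = extrapolation u n - a • g := by
  have h2 : (n : ℝ) + 2 ≠ 0 := by positivity
  rw [extrapolation_succ, h, extrapolation, smul_add, smul_sub, smul_smul, smul_smul,
    mul_inv_cancel_left₀ h2, mul_div_cancel₀ _ h2]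
  module

lemma norm_sq_extrapolation_ge (u : ℕ → X) (n : ℕ) :
    ((n : ℝ) + 1) * ‖u n‖ ^ 2 ≤ n * ‖u (n - 1)‖ ^ 2 + ‖extrapolation u n‖ ^ 2 := by
  have h : ‖extrapolation u n‖ ^ 2 = ((n : ℝ) + 1) ^ 2 * ‖u n‖ ^ 2
      - 2 * (((n : ℝ) + 1) * n * inner ℝ (u n) (u (n - 1))) + (n : ℝ) ^ 2 * ‖u (n - 1)‖ ^ 2 := by
    rw [extrapolation, norm_sub_sq_real, norm_smul, norm_smul, real_inner_smul_left,
      real_inner_smul_right, mul_pow, mul_pow]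
    simp only [Real.norm_eq_abs, sq_abs]
    ring
  have hsub := norm_sub_sq_real (u n) (u (n - 1))
  have : 0 ≤ ((n : ℝ) * (n + 1)) * ‖u n - u (n - 1)‖ ^ 2 := by positivity
  rw [hsub] at this
  rw [h]
  linarith

lemma two_inner_extrapolation_ge (u : ℕ → X) (n : ℕ) :
    ((n : ℝ) + 2) * ‖u n‖ ^ 2 - n * ‖u (n - 1)‖ ^ 2 ≤
      2 * inner ℝ (extrapolation u n) (u n) := by
  have hsub := norm_sub_sq_real (u n) (u (n - 1))
  have : 0 ≤ (n : ℝ) * ‖u n - u (n - 1)‖ ^ 2 := by positivity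
  rw [hsub] at this
  rw [extrapolation, inner_sub_left, real_inner_smul_left, real_inner_smul_left,
    real_inner_self_eq_norm_sq, real_inner_comm]
  linarith

variable [CompleteSpace X] {Y : Type*} [NormedAddCommGroup Y] [InnerProductSpace ℝ Y]
  [CompleteSpace Y]

/-- Energy estimate for one heavy-ball step along a single operator. -/
lemma norm_sq_extrapolation_sub_le (A : X →L[ℝ] Y) {η c : ℝ} (hη : 0 ≤ η)
    (hc : c ≤ 1 - η * ‖A‖ ^ 2) (u : ℕ → X) (d : Y) (n : ℕ) :
    ‖extrapolation u n - η • A.adjoint (A (u n) - d)‖ ^ 2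
        + ((n : ℝ) + 1) * (η * ‖A (u n) - d‖ ^ 2)
        + (c * (η * ‖A (u n) - d‖ ^ 2) + 2 * (η * inner ℝ d (A (u n) - d)))
      ≤ ‖extrapolation u n‖ ^ 2 + n * (η * ‖A (u (n - 1)) - d‖ ^ 2) := by
  set q : ℕ → Y := fun k => A (u k) - d with hq
  have hAw : A (extrapolation u n) = extrapolation q n + d := by
    simp only [extrapolation, hq, map_sub, map_smul]
    module
  have hexp := norm_sub_sq_real (extrapolation u n) (η • A.adjoint (q n))
  rw [real_inner_smul_right, ContinuousLinearMap.adjoint_inner_right, hAw, inner_add_left,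
    norm_smul, mul_pow, Real.norm_eq_abs, sq_abs] at hexp
  have h1 := mul_le_mul_of_nonneg_left (two_inner_extrapolation_ge q n) hη
  have h2 : ‖A.adjoint (q n)‖ ^ 2 ≤ ‖A‖ ^ 2 * ‖q n‖ ^ 2 := by
    rw [← mul_pow]
    refine pow_le_pow_left₀ (norm_nonneg _) ?_ 2
    simpa using A.adjoint.le_opNorm (q n)
  have h3 := mul_le_mul_of_nonneg_left h2 (sq_nonneg η)
  have h4 := mul_le_mul_of_nonneg_right hc (mul_nonneg hη (sq_nonneg ‖q n‖))
  change ‖extrapolation u n - η • A.adjoint (q n)‖ ^ 2 + ((n : ℝ) + 1) * (η * ‖q n‖ ^ 2)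
    + (c * (η * ‖q n‖ ^ 2) + 2 * (η * inner ℝ d (q n)))
    ≤ ‖extrapolation u n‖ ^ 2 + n * (η * ‖q (n - 1)‖ ^ 2)
  linarith

end Extrapolation

section System

variable {p : ℕ} {hp : 0 < p} {X : Type*} [NormedAddCommGroup X] [InnerProductSpace ℝ X]
  {Y : Fin p → Type*} [∀ i, NormedAddCommGroup (Y i)] [∀ i, InnerProductSpace ℝ (Y i)]

/-- The weighted residual `∑ i, η i ‖A i x - d i‖²`. -/
noncomputable def weightedResidual (A : ∀ i, X →L[ℝ] Y i) (η : Fin p → ℝ) (d : ∀ i, Y i)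
    (x : X) : ℝ :=
  ∑ i, η i * ‖A i x - d i‖ ^ 2

/-- The Lyapunov function of the primal heavy-ball iteration. -/
noncomputable def primalEnergy (A : ∀ i, X →L[ℝ] Y i) (η : Fin p → ℝ) (d : ∀ i, Y i)
    (u : ℕ → X) (n : ℕ) : ℝ :=
  ‖extrapolation u n‖ ^ 2 + n / p * weightedResidual A η d (u (n - 1))

lemma weightedResidual_nonneg {A : ∀ i, X →L[ℝ] Y i} {η : Fin p → ℝ} (hη : ∀ i, 0 ≤ η i)
    (d : ∀ i, Y i) (x : X) : 0 ≤ weightedResidual A η d x :=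
  Finset.sum_nonneg fun i _ => mul_nonneg (hη i) (sq_nonneg _)

variable [CompleteSpace X] [∀ i, CompleteSpace (Y i)]

lemma sum_primalEnergy_le (hp : 0 < p) (A : ∀ i, X →L[ℝ] Y i) {η : Fin p → ℝ} {c : ℝ}
    (hη : ∀ i, 0 ≤ η i) (hc : ∀ i, c ≤ 1 - η i * ‖A i‖ ^ 2) (d : ∀ i, Y i)
    {u : (ℕ → Fin p) → ℕ → X}
    (hu : ∀ ω i n k, n ≤ k → u (Function.update ω k i) n = u ω n)
    (hstep : ∀ ω n, extrapolation (u ω) (n + 1) = extrapolation (u ω) n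
      - η (ω n) • (A (ω n)).adjoint (A (ω n) (u ω n) - d (ω n)))
    (ω : ℕ → Fin p) (n : ℕ) :
    ∑ i, primalEnergy A η d (u (Function.update ω n i)) (n + 1)
        + (c * weightedResidual A η d (u ω n)
          + 2 * ∑ i, η i * inner ℝ (d i) (A i (u ω n) - d i))
      ≤ p * primalEnergy A η d (u ω) n := by
  have hp' : (p : ℝ) ≠ 0 := by positivity
  have hw : ∀ i, extrapolation (u (Function.update ω n i)) n = extrapolation (u ω) n := by
    intro i
    simp only [extrapolation, hu ω i n n le_rfl, hu ω i (n - 1) n (by omega)]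
  have hupd : ∀ i, extrapolation (u (Function.update ω n i)) (n + 1) =
      extrapolation (u ω) n - η i • (A i).adjoint (A i (u ω n) - d i) := by
    intro i
    have h : ∀ ω' j, ω' n = j → extrapolation (u ω') (n + 1) =
        extrapolation (u ω') n - η j • (A j).adjoint (A j (u ω' n) - d j) := by
      rintro ω' _ rfl
      exact hstep ω' n
    rw [h _ i (Function.update_self ..), hw, hu ω i n n le_rfl]
  have hsum := Finset.sum_le_sum fun i (_ : i ∈ Finset.univ) =>
    norm_sq_extrapolation_sub_le (A i) (hη i) (hc i) (u ω) (d i) n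
  simp only [Finset.sum_add_distrib, ← Finset.mul_sum, Finset.sum_const, Finset.card_univ,
    Fintype.card_fin, nsmul_eq_mul] at hsum
  simp only [primalEnergy, hupd, Nat.add_sub_cancel,
    hu ω _ n n le_rfl, Finset.sum_add_distrib, Finset.sum_const, Finset.card_univ,
    Fintype.card_fin, nsmul_eq_mul, Nat.cast_add, Nat.cast_one]
  rw [← mul_assoc, mul_div_cancel₀ _ hp', mul_add, ← mul_assoc (p : ℝ) ((n : ℝ) / p),
    mul_div_cancel₀ _ hp']
  simpa only [weightedResidual, add_assoc] using hsum

/-- Propagation of data noise along the stochastic heavy-ball iteration. -/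
lemma avg_norm_sq_le_of_noise (A : ∀ i, X →L[ℝ] Y i) {η : Fin p → ℝ} {c : ℝ}
    (hη : ∀ i, 0 ≤ η i) (hc₀ : 0 < c) (hc : ∀ i, c ≤ 1 - η i * ‖A i‖ ^ 2) (d : ∀ i, Y i)
    {u : (ℕ → Fin p) → ℕ → X} (hu₀ : ∀ ω, u ω 0 = 0)
    (hu : ∀ ω i n k, n ≤ k → u (Function.update ω k i) n = u ω n)
    (hstep : ∀ ω n, extrapolation (u ω) (n + 1) = extrapolation (u ω) n
      - η (ω n) • (A (ω n)).adjoint (A (ω n) (u ω n) - d (ω n))) (n : ℕ) :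
    avg p hp n (fun ω => ‖u ω n‖ ^ 2) ≤ n * (c⁻¹ * (∑ i, η i * ‖d i‖ ^ 2) / p) := by
  have hp' : (0 : ℝ) < p := by positivity
  have hw : ∀ n, avg p hp n (fun ω => ‖extrapolation (u ω) n‖ ^ 2)
      ≤ n * (c⁻¹ * (∑ i, η i * ‖d i‖ ^ 2) / p) := by
    intro n
    have hdrift := avg_le_of_drift (hp := hp) (V := fun ω n => primalEnergy A η d (u ω) n)
      (v := 0) (c := c⁻¹ * ∑ i, η i * ‖d i‖ ^ 2) (by simp [primalEnergy, hu₀]) ?_ n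
    · rw [zero_add] at hdrift
      refine (avg_mono fun ω => ?_).trans hdrift
      have := weightedResidual_nonneg (A := A) hη d (u ω (n - 1))
      exact le_add_of_nonneg_right (by positivity)
    · intro ω n
      have hE := sum_primalEnergy_le hp A hη hc d hu hstep ω n
      have hyoung : 0 ≤ c⁻¹ * ∑ i, η i * ‖d i‖ ^ 2 + (c * weightedResidual A η d (u ω n)
          + 2 * ∑ i, η i * inner ℝ (d i) (A i (u ω n) - d i)) := by
        rw [weightedResidual, Finset.mul_sum, Finset.mul_sum, Finset.mul_sum,
          ← Finset.sum_add_distrib, ← Finset.sum_add_distrib]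
        refine Finset.sum_nonneg fun i _ => ?_
        have hsq := norm_add_sq_real (d i) (c • (A i (u ω n) - d i))
        rw [real_inner_smul_right, norm_smul, mul_pow, Real.norm_eq_abs, sq_abs] at hsq
        have hnn : 0 ≤ c⁻¹ * η i * ‖d i + c • (A i (u ω n) - d i)‖ ^ 2 :=
          mul_nonneg (mul_nonneg (inv_nonneg.2 hc₀.le) (hη i)) (sq_nonneg _)
        rw [hsq] at hnn
        refine hnn.trans_eq ?_
        field_simp
        ring
      linarith
  set b := c⁻¹ * (∑ i, η i * ‖d i‖ ^ 2) / p
  have hb : 0 ≤ b := by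
    have : 0 ≤ ∑ i, η i * ‖d i‖ ^ 2 :=
      Finset.sum_nonneg fun i _ => mul_nonneg (hη i) (sq_nonneg _)
    positivity
  induction n with
  | zero => simp [hu₀, avg_const]
  | succ n ih =>
    have hmean : avg p hp (n + 1) (fun ω => ((n : ℝ) + 2) * ‖u ω (n + 1)‖ ^ 2)
        ≤ avg p hp (n + 1) fun ω =>
          ((n : ℝ) + 1) * ‖u ω n‖ ^ 2 + ‖extrapolation (u ω) (n + 1)‖ ^ 2 := by
      refine avg_mono fun ω => ?_
      have := norm_sq_extrapolation_ge (u ω) (n + 1)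
      rw [Nat.add_sub_cancel] at this
      push_cast at this
      linarith
    rw [avg_const_mul, avg_add, avg_const_mul,
      avg_succ_of_forall_update_eq (f := fun ω => ‖u ω n‖ ^ 2)
        (fun ω i => by simp only [hu ω i n n le_rfl])] at hmean
    have hw' := hw (n + 1)
    have hih := mul_le_mul_of_nonneg_left ih (show (0 : ℝ) ≤ (n : ℝ) + 1 by positivity)
    push_cast at hw' ⊢
    refine le_of_mul_le_mul_left (a := (n : ℝ) + 2) ?_ (by positivity)
    have : 0 ≤ ((n : ℝ) + 1) * b := by positivity
    linarith

/-- Exact-data heavy-ball iterates, paired with the dual variable `ζ` for which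
`x₀ + ∑ j, A j* (ζ j)` is the extrapolated iterate. -/
noncomputable def exactState (A : ∀ i, X →L[ℝ] Y i) (η : Fin p → ℝ) (y : ∀ i, Y i) (x₀ : X)
    (ω : ℕ → Fin p) : ℕ → X × (∀ j, Y j)
  | 0 => (x₀, 0)
  | n + 1 =>
    let s := exactState A η y x₀ ω n
    let ζ := Function.update s.2 (ω n) (s.2 (ω n) - η (ω n) • (A (ω n) s.1 - y (ω n)))
    (((n : ℝ) + 2)⁻¹ • (((n : ℝ) + 1) • s.1 + (x₀ + ∑ j, (A j).adjoint (ζ j))), ζ)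

variable (A : ∀ i, X →L[ℝ] Y i) (η : Fin p → ℝ) (y : ∀ i, Y i) (x₀ : X)

lemma exactState_update (ω : ℕ → Fin p) (i : Fin p) {n k : ℕ} (hnk : n ≤ k) :
    exactState A η y x₀ (Function.update ω k i) n = exactState A η y x₀ ω n :=
  update_eq_of_recursion (F := exactState A η y x₀) (s := (x₀, 0))
    (T := fun n i s =>
      let ζ := Function.update s.2 i (s.2 i - η i • (A i s.1 - y i))
      (((n : ℝ) + 2)⁻¹ • (((n : ℝ) + 1) • s.1 + (x₀ + ∑ j, (A j).adjoint (ζ j))), ζ))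
    (fun _ => rfl) (fun _ _ => rfl) ω i hnk

lemma exactState_succ_snd (ω : ℕ → Fin p) (n : ℕ) :
    (exactState A η y x₀ ω (n + 1)).2 = Function.update (exactState A η y x₀ ω n).2 (ω n)
      ((exactState A η y x₀ ω n).2 (ω n)
        - η (ω n) • (A (ω n) (exactState A η y x₀ ω n).1 - y (ω n))) :=
  rfl

lemma extrapolation_exactState (ω : ℕ → Fin p) (n : ℕ) :
    extrapolation (fun k => (exactState A η y x₀ ω k).1) n
      = x₀ + ∑ j, (A j).adjoint ((exactState A η y x₀ ω n).2 j) := by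
  cases n with
  | zero => simp [exactState]
  | succ n =>
    have h2 : (n : ℝ) + 2 ≠ 0 := by positivity
    rw [extrapolation_succ]
    conv_lhs => rw [exactState]
    simp only [smul_smul, mul_inv_cancel₀ h2, one_smul, ← exactState_succ_snd]
    abel

lemma extrapolation_exactState_succ (ω : ℕ → Fin p) (n : ℕ) :
    extrapolation (fun k => (exactState A η y x₀ ω k).1) (n + 1)
      = extrapolation (fun k => (exactState A η y x₀ ω k).1) n
        - η (ω n) • (A (ω n)).adjoint (A (ω n) (exactState A η y x₀ ω n).1 - y (ω n)) := by
  rw [extrapolation_exactState, extrapolation_exactState, exactState_succ_snd,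
    sum_apply_update (fun j v => (A j).adjoint v), map_sub, map_smul]
  abel

variable {A η y x₀}

/-- Convergence rate of the stochastic heavy-ball iteration with exact data under the source
condition `x - x₀ = ∑ j, A j* (μ j)`. -/
lemma avg_norm_sq_exactState_sub_le {c : ℝ} (hη : ∀ i, 0 < η i) (hc₀ : 0 < c)
    (hc : ∀ i, c ≤ 1 - η i * ‖A i‖ ^ 2) {x : X} (hx : ∀ i, A i x = y i) {μ : ∀ j, Y j}
    (hμ : x - x₀ = ∑ j, (A j).adjoint (μ j)) (n : ℕ) :
    ((n : ℝ) + 1) / p * avg p hp n (fun ω => ‖(exactState A η y x₀ ω n).1 - x‖ ^ 2)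
      ≤ c⁻¹ * (‖x₀ - x‖ ^ 2 + c * ∑ i, (η i)⁻¹ * ‖μ i‖ ^ 2) := by
  have hp' : (p : ℝ) ≠ 0 := by positivity
  set u : (ℕ → Fin p) → ℕ → X := fun ω k => (exactState A η y x₀ ω k).1 - x with hudef
  set ζ : (ℕ → Fin p) → ℕ → ∀ j, Y j := fun ω k => (exactState A η y x₀ ω k).2 with hζdef
  have hη' : ∀ i, 0 ≤ η i := fun i => (hη i).le
  have hu : ∀ ω i n k, n ≤ k → u (Function.update ω k i) n = u ω n := fun ω i n k h => by
    simp only [hudef, exactState_update A η y x₀ ω i h]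
  have hres : ∀ ω n i, A i (u ω n) = A i (exactState A η y x₀ ω n).1 - y i := fun ω n i => by
    simp only [hudef, map_sub, hx]
  have hext : ∀ ω n, extrapolation (u ω) n = ∑ j, (A j).adjoint (ζ ω n j - μ j) := by
    intro ω n
    simp only [hudef, hζdef, extrapolation_sub_const, extrapolation_exactState, map_sub,
      Finset.sum_sub_distrib, ← hμ]
    abel
  have hstep : ∀ ω n, extrapolation (u ω) (n + 1) = extrapolation (u ω) n
      - η (ω n) • (A (ω n)).adjoint (A (ω n) (u ω n) - (0 : ∀ i, Y i) (ω n)) := by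
    intro ω n
    rw [Pi.zero_apply, sub_zero, hres, hudef]
    simp only [extrapolation_sub_const, extrapolation_exactState_succ]
    abel
  set D : (ℕ → Fin p) → ℕ → ℝ := fun ω n => ∑ j, (η j)⁻¹ * ‖ζ ω n j - μ j‖ ^ 2 with hD
  have hDstep : ∀ ω n, ∑ i, D (Function.update ω n i) (n + 1) = p * D ω n
      - 2 * inner ℝ (extrapolation (u ω) n) (u ω n) + weightedResidual A η 0 (u ω n) := by
    intro ω n
    have hi : ∀ i, D (Function.update ω n i) (n + 1) = D ω n
        - 2 * inner ℝ ((A i).adjoint (ζ ω n i - μ i)) (u ω n)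
        + η i * ‖A i (u ω n) - (0 : ∀ i, Y i) i‖ ^ 2 := by
      intro i
      have hz : ζ (Function.update ω n i) (n + 1)
          = Function.update (ζ ω n) i (ζ ω n i - η i • A i (u ω n)) := by
        have h : ∀ ω' j, ω' n = j → ζ ω' (n + 1) = Function.update (ζ ω' n) j
            (ζ ω' n j - η j • (A j (exactState A η y x₀ ω' n).1 - y j)) := by
          rintro ω' _ rfl
          exact exactState_succ_snd A η y x₀ ω' n
        rw [h _ i (Function.update_self ..), hres]
        simp only [hζdef, exactState_update A η y x₀ ω i le_rfl]
      simp only [hD, hz]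
      rw [sum_apply_update (fun j v => (η j)⁻¹ * ‖v - μ j‖ ^ 2), sub_right_comm,
        norm_sub_sq_real (ζ ω n i - μ i), real_inner_smul_right, norm_smul, mul_pow, Real.norm_eq_abs, sq_abs,
        ContinuousLinearMap.adjoint_inner_left, Pi.zero_apply, sub_zero]
      have := (hη i).ne'
      field_simp
      ring
    simp only [hi, Finset.sum_add_distrib, Finset.sum_sub_distrib, ← Finset.mul_sum,
      Finset.sum_const, Finset.card_univ, Fintype.card_fin, nsmul_eq_mul, ← sum_inner, ← hext]
    rfl
  set V : (ℕ → Fin p) → ℕ → ℝ := fun ω n =>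
    D ω n + n / p * ‖u ω (n - 1)‖ ^ 2 + c⁻¹ * primalEnergy A η 0 (u ω) n with hV
  have hdrift := avg_le_of_drift (hp := hp) (V := V)
    (v := c⁻¹ * (‖x₀ - x‖ ^ 2 + c * ∑ i, (η i)⁻¹ * ‖μ i‖ ^ 2)) (c := 0) ?_ ?_ (n + 1)
  · rw [zero_div, mul_zero, add_zero] at hdrift
    rw [← avg_const_mul, ← avg_succ_of_forall_update_eq]
    · refine (avg_mono fun ω => ?_).trans hdrift
      have h1 : 0 ≤ D ω (n + 1) :=
        Finset.sum_nonneg fun i _ => mul_nonneg (inv_nonneg.2 (hη' i)) (sq_nonneg _)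
      have h2 : 0 ≤ primalEnergy A η 0 (u ω) (n + 1) := by
        have := weightedResidual_nonneg (A := A) hη' 0 (u ω (n + 1 - 1))
        unfold primalEnergy
        positivity
      have h3 : 0 ≤ c⁻¹ * primalEnergy A η 0 (u ω) (n + 1) := by positivity
      simp only [hV, Nat.add_sub_cancel, Nat.cast_add, Nat.cast_one]
      linarith
    · intro ω i
      rw [exactState_update A η y x₀ ω i le_rfl]
  · intro ω
    simp only [hV, hD, hudef, hζdef, primalEnergy, exactState, extrapolation_zero,
      Pi.zero_apply, zero_sub, norm_neg, Nat.cast_zero, zero_div, zero_mul, add_zero]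
    rw [mul_add, inv_mul_cancel_left₀ hc₀.ne']
    linarith
  · intro ω n
    have hE := sum_primalEnergy_le hp A hη' hc 0 hu hstep ω n
    simp only [Pi.zero_apply, inner_zero_left, mul_zero, Finset.sum_const_zero, add_zero] at hE
    have hE' := mul_le_mul_of_nonneg_left hE (inv_nonneg.2 hc₀.le)
    rw [mul_add, inv_mul_cancel_left₀ hc₀.ne'] at hE'
    have hin := two_inner_extrapolation_ge (u ω) n
    simp only [hV, Finset.sum_add_distrib, hDstep, Nat.add_sub_cancel, hu ω _ n n le_rfl,
      ← Finset.mul_sum, Finset.sum_const, Finset.card_univ, Fintype.card_fin, nsmul_eq_mul,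
      Nat.cast_add, Nat.cast_one]
    have e1 : ((n : ℝ) + 1) / p * (p * ‖u ω n‖ ^ 2) = ((n : ℝ) + 1) * ‖u ω n‖ ^ 2 := by
      field_simp
    have e2 : (p : ℝ) * ((n : ℝ) / p * ‖u ω (n - 1)‖ ^ 2) = (n : ℝ) * ‖u ω (n - 1)‖ ^ 2 := by
      field_simp
    rw [mul_add, mul_add, e1, e2]
    have := sq_nonneg ‖u ω n‖
    linarith

end System


/-- **Theorem SHB.thm (rate of convergence under an a priori stopping rule).**
There is a constant `C = C (c₀, η̄, M₀, c₁, c₂)`, depending only on `c₀`, `η̄`,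
`M₀ := ‖x₀ − x†‖² + c₀ ∑_i (1/η i) ‖λ† i‖²` and the fixed constants `0 < c₁ ≤ c₂`,
such that for every problem instance with `0 < η i < 1/‖A i‖²`, source condition
`x† − x₀ = A* λ†` for the `x₀`-minimal norm solution `x†`, noisy data of total noise
level `δ > 0`, and stopping index `n_δ` with `c₁ δ⁻¹ ≤ (n_δ + 1)/p ≤ c₂ δ⁻¹`, the
stochastic heavy-ball iterates satisfy `E[‖x^δ_{n_δ} − x†‖²] ≤ C δ`. -/
theorem stmt_11 :
    ∃ C : ℝ → ℝ → ℝ → ℝ → ℝ → ℝ,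
      ∀ (p : ℕ) (hp : 0 < p)
        (X : Type) (_ : NormedAddCommGroup X), ∀ (_ : InnerProductSpace ℝ X)
        (_ : CompleteSpace X)
        (Y : Fin p → Type) (_ : ∀ i, NormedAddCommGroup (Y i)),
        ∀ (_ : ∀ i, InnerProductSpace ℝ (Y i)) (_ : ∀ i, CompleteSpace (Y i))
        (A : ∀ i, X →L[ℝ] Y i) (y yδ : ∀ i, Y i) (δi : Fin p → ℝ) (δ : ℝ)
        (η : Fin p → ℝ) (ηbar c₀ : ℝ) (x₀ xdag : X) (lamdag : ∀ j, Y j) (M₀ : ℝ)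
        (xδ : (ℕ → Fin p) → ℕ → X) (c₁ c₂ : ℝ) (nδ : ℕ),
        (∀ i, ‖yδ i - y i‖ ≤ δi i) →
        δ = Real.sqrt (∑ i, (δi i) ^ 2) →
        (∀ i, 0 < η i ∧ η i < 1 / ‖A i‖ ^ 2) →
        IsGreatest (Set.range η) ηbar →
        IsLeast (Set.range fun i => 1 - η i * ‖A i‖ ^ 2) c₀ →
        (∀ i, (A i) xdag = y i) →
        (∀ x' : X, (∀ i, (A i) x' = y i) → ‖xdag - x₀‖ ≤ ‖x' - x₀‖) →
        xdag - x₀ = ∑ j, (A j).adjoint (lamdag j) →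
        M₀ = ‖x₀ - xdag‖ ^ 2 + c₀ * ∑ i, (η i)⁻¹ * ‖lamdag i‖ ^ 2 →
        (∀ ω, xδ ω 0 = x₀) →
        (∀ ω, ∀ n : ℕ, xδ ω (n + 1) = xδ ω n
          - (((n : ℝ) + 2)⁻¹ * η (ω n)) •
              ((A (ω n)).adjoint ((A (ω n)) (xδ ω n) - yδ (ω n)))
          + ((n : ℝ) / ((n : ℝ) + 2)) • (xδ ω n - xδ ω (n - 1))) →
        0 < c₁ → c₁ ≤ c₂ → 0 < δ →
        c₁ * δ⁻¹ ≤ ((nδ : ℝ) + 1) / p → ((nδ : ℝ) + 1) / p ≤ c₂ * δ⁻¹ →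
        avg p hp nδ (fun ω => ‖xδ ω nδ - xdag‖ ^ 2) ≤ C c₀ ηbar M₀ c₁ c₂ * δ := by
  refine ⟨fun c₀ ηbar M₀ c₁ c₂ => 2 * (c₀⁻¹ * M₀ / c₁) + 2 * (c₀⁻¹ * ηbar * c₂), ?_⟩
  intro p hp X _ _ _ Y _ _ _ A y yδ δi δ η ηbar c₀ x₀ xdag lamdag M₀ xδ c₁ c₂ nδ hδi hδ hη
    hbar hc hx _ hsrc hM h0 hrec hc₁ _ hδpos hlow hupp
  have hp' : (0 : ℝ) < p := by positivity
  have hηpos : ∀ i, 0 < η i := fun i => (hη i).1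
  have hη' : ∀ i, 0 ≤ η i := fun i => (hη i).1.le
  have hc' : ∀ i, c₀ ≤ 1 - η i * ‖A i‖ ^ 2 := fun i => hc.2 ⟨i, rfl⟩
  have hc₀ : 0 < c₀ := by
    obtain ⟨i, rfl⟩ := hc.1
    have hA : 0 < ‖A i‖ ^ 2 := one_div_pos.1 ((hη i).1.trans (hη i).2)
    have := (lt_div_iff₀ hA).1 (hη i).2
    simpa using this
  have hsum_noise : ∑ i, η i * ‖yδ i - y i‖ ^ 2 ≤ ηbar * δ ^ 2 := by
    rw [hδ, Real.sq_sqrt (Finset.sum_nonneg fun i _ => sq_nonneg _), Finset.mul_sum]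
    refine Finset.sum_le_sum fun i _ => ?_
    have hi := hbar.2 ⟨i, rfl⟩
    exact mul_le_mul hi (pow_le_pow_left₀ (norm_nonneg _) (hδi i) 2) (sq_nonneg _)
      ((hη' i).trans hi)
  have hxδ : ∀ ω n, extrapolation (xδ ω) (n + 1) = extrapolation (xδ ω) n
      - η (ω n) • (A (ω n)).adjoint (A (ω n) (xδ ω n) - yδ (ω n)) :=
    fun ω n => extrapolation_succ_of_heavy_ball (hrec ω n)
  have hadapt : ∀ ω i n k, n ≤ k → xδ (Function.update ω k i) n = xδ ω n := by
    intro ω i n k hnk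
    refine congrArg Prod.fst (update_eq_of_recursion
      (F := fun ω n => (xδ ω n, xδ ω (n - 1))) (s := (x₀, x₀))
      (T := fun n i s => (s.1 - (((n : ℝ) + 2)⁻¹ * η i) • (A i).adjoint (A i s.1 - yδ i)
        + ((n : ℝ) / ((n : ℝ) + 2)) • (s.1 - s.2), s.1)) ?_ ?_ ω i hnk)
    · intro ω
      simp [h0]
    · intro ω n
      simp only [hrec ω n, Nat.add_sub_cancel]
  have hnoise := avg_norm_sq_le_of_noise (hp := hp) A hη' hc₀ hc' (fun i => yδ i - y i)
    (u := fun ω k => xδ ω k - (exactState A η y x₀ ω k).1)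
    (fun ω => by simp [h0, exactState])
    (fun ω i n k h => by simp only [hadapt ω i n k h, exactState_update A η y x₀ ω i h])
    (fun ω n => by
      simp only [extrapolation_sub, hxδ, extrapolation_exactState_succ, map_sub]
      module) nδ
  have hexact := avg_norm_sq_exactState_sub_le (hp := hp) hηpos hc₀ hc' hx hsrc nδ
  rw [← hM] at hexact
  set a := avg p hp nδ fun ω => ‖(exactState A η y x₀ ω nδ).1 - xdag‖ ^ 2
  have ha : 0 ≤ a := by
    simpa only [avg_const] using
      avg_mono (hp := hp) (m := nδ) (f := fun _ => 0) fun ω => sq_nonneg _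
  have ha' : a ≤ c₀⁻¹ * M₀ / c₁ * δ := by
    have := (mul_le_mul_of_nonneg_right hlow ha).trans hexact
    rw [div_mul_eq_mul_div, le_div_iff₀ hc₁]
    calc a * c₁ = c₁ * δ⁻¹ * a * δ := by field_simp
      _ ≤ c₀⁻¹ * M₀ * δ := mul_le_mul_of_nonneg_right this hδpos.le
  have hb' : (nδ : ℝ) * (c₀⁻¹ * (∑ i, η i * ‖yδ i - y i‖ ^ 2) / p)
      ≤ c₀⁻¹ * ηbar * c₂ * δ := by
    set S := ∑ i, η i * ‖yδ i - y i‖ ^ 2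
    have hS : 0 ≤ S := Finset.sum_nonneg fun i _ => mul_nonneg (hη' i) (sq_nonneg _)
    have hn : (nδ : ℝ) / p ≤ c₂ * δ⁻¹ := le_trans (by gcongr; linarith) hupp
    have hc₂ : 0 ≤ c₂ * δ⁻¹ := le_trans (by positivity) hn
    calc (nδ : ℝ) * (c₀⁻¹ * S / p) = (nδ : ℝ) / p * (c₀⁻¹ * S) := by ring
      _ ≤ c₂ * δ⁻¹ * (c₀⁻¹ * (ηbar * δ ^ 2)) := by gcongr
      _ = c₀⁻¹ * ηbar * c₂ * δ := by field_simp
  calc avg p hp nδ (fun ω => ‖xδ ω nδ - xdag‖ ^ 2)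
      ≤ avg p hp nδ (fun ω => 2 * ‖(exactState A η y x₀ ω nδ).1 - xdag‖ ^ 2
          + 2 * ‖xδ ω nδ - (exactState A η y x₀ ω nδ).1‖ ^ 2) := by
        refine avg_mono fun ω => ?_
        have h := norm_add_le (xδ ω nδ - (exactState A η y x₀ ω nδ).1)
          ((exactState A η y x₀ ω nδ).1 - xdag)
        rw [sub_add_sub_cancel] at h
        have h2 := pow_le_pow_left₀ (norm_nonneg _) h 2
        linarith [add_sq_le (a := ‖xδ ω nδ - (exactState A η y x₀ ω nδ).1‖)
          (b := ‖(exactState A η y x₀ ω nδ).1 - xdag‖)]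
    _ ≤ (2 * (c₀⁻¹ * M₀ / c₁) + 2 * (c₀⁻¹ * ηbar * c₂)) * δ := by
        rw [avg_add, avg_const_mul, avg_const_mul, add_mul]
        linarith
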